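/- If z² ≤ 1, then BF(z,k) = sqrt(1+k)·exp(-z²k/(2(1+k))) > 1 for all k > 0; i.e. the Bayes factor always favours the null and no flip point exists. -/

import Mathlib

noncomputable def BF (z k : ℝ) : ℝ := Real.sqrt (1 + k) * Real.exp (-(z^2 * k) / (2 * (1 + k)))

/-!
For fixed `k ≥ 0` the Bayes factor decreases in `z ^ 2`, so the worst case of `z ^ 2 ≤ 1` is
`z = 1`. There the square of the Bayes factor is `x * exp (x⁻¹ - 1)` with `x = 1 + k`, and the
strict tangent line bound `y + 1 < exp y` at `y = x⁻¹ - 1` says that this exceeds `1`.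
-/

theorem BF_nonneg (z k : ℝ) : 0 ≤ BF z k :=
  mul_nonneg (Real.sqrt_nonneg _) (Real.exp_nonneg _)

theorem BF_sq (z : ℝ) {k : ℝ} (hk : -1 ≤ k) :
    BF z k ^ 2 = (1 + k) * Real.exp (-(z ^ 2 * k) / (1 + k)) := by
  rw [BF, mul_pow, Real.sq_sqrt (by linarith), ← Real.exp_nat_mul, Nat.cast_ofNat,
    ← mul_div_assoc, mul_div_mul_left _ _ two_ne_zero]

theorem BF_le_BF_of_sq_le_sq {z w k : ℝ} (hk : 0 ≤ k) (h : z ^ 2 ≤ w ^ 2) :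
    BF w k ≤ BF z k := by
  unfold BF
  gcongr

theorem one_lt_mul_exp_inv_sub_one {x : ℝ} (hx : 0 < x) (hx_ne : x ≠ 1) :
    1 < x * Real.exp (x⁻¹ - 1) := by
  have tangent : x⁻¹ - 1 + 1 < Real.exp (x⁻¹ - 1) :=
    Real.add_one_lt_exp (sub_ne_zero.mpr (inv_ne_one.mpr hx_ne))
  calc
    1 = x * (x⁻¹ - 1 + 1) := by rw [sub_add_cancel, mul_inv_cancel₀ hx.ne']
    _ < x * Real.exp (x⁻¹ - 1) := mul_lt_mul_of_pos_left tangent hx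

theorem one_lt_BF_one {k : ℝ} (hk : -1 < k) (hk_ne : k ≠ 0) : 1 < BF 1 k := by
  have hpos : 0 < 1 + k := by linarith
  have exponent_eq : -(1 ^ 2 * k) / (1 + k) = (1 + k)⁻¹ - 1 := by
    field_simp
    ring
  rw [← one_lt_sq_iff₀ (BF_nonneg 1 k), BF_sq 1 hk.le, exponent_eq]
  exact one_lt_mul_exp_inv_sub_one hpos (by simpa using hk_ne)

theorem bf_gt_one_of_small_z (z : ℝ) (hz : z^2 ≤ 1) :
    ∀ k : ℝ, 0 < k → 1 < BF z k := by
  intro k hk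
  calc
    1 < BF 1 k := one_lt_BF_one (by linarith) hk.ne'
    _ ≤ BF z k := BF_le_BF_of_sq_le_sq hk.le (by rwa [one_pow])
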